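/- Let d ≥ 1 and k ≥ 2, and suppose ℤ^d is the disjoint union of k cosets T_1, …, T_k, where T_j = v_j + ∏_{i=1}^d n_{j,i}ℤ with n_{j,i} positive integers. Let j be an index maximizing ∏_{i=1}^d n_{j,i} over all j. Then there exists j' ≠ j such that n_{j,i} divides n_{j',i} for every i = 1, …, d. -/

import Mathlib

open scoped BigOperators

/-!
The group algebra `R[G]` of an abelian group acts on functions `G → R` by translation. Suppose `G`
is partitioned into finitely many cosets `T a` of subgroups `H a`, and let `χ` be a character that
is trivial on `H j` but on no other `H a`; pick `h a ∈ H a` with `χ (h a) ≠ 1` for `a ≠ j`. The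
product `P` of the `h a - 1` over `a ≠ j` annihilates the indicator of every `T a` with `a ≠ j` as
well as the constant function `1`, hence also the indicator of `T j`. This forces `P` to vanish in
`R[G ⧸ H j]`, through which `χ` factors, so `χ P = ∏ (χ (h a) - 1)` is zero, which is impossible in
a domain.

In `ℤ^d`, apply this to `χ w = ∏ i, z i ^ w i` with `z i` a primitive root of unity of order
`n j i`: it is trivial on `∏ i, m i ℤ` exactly when every `n j i` divides `m i`.
-/

open AddMonoidAlgebra Function
open scoped Pointwise

section LinearExtension

variable {R G : Type*} [CommSemiring R]

/-- The `R`-linear extension of a function `f : G → R` to the group algebra `R[G]`. The translate of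
`f` by `P : R[G]` is encoded by its values `linearExtension f (P * single x 1)` at all `x`. -/
noncomputable def linearExtension (f : G → R) : R[G] →ₗ[R] R :=
  Finsupp.linearCombination R f ∘ₗ (AddMonoidAlgebra.coeffLinearEquiv R).toLinearMap

theorem linearExtension_apply (f : G → R) (P : R[G]) :
    linearExtension f P = ∑ g ∈ P.coeff.support, P.coeff g * f g := rfl

@[simp]
theorem linearExtension_single (f : G → R) (g : G) (r : R) :
    linearExtension f (single g r) = r * f g := by
  simp [linearExtension]

theorem linearExtension_sum {κ : Type*} (s : Finset κ) (f : κ → G → R) (P : R[G]) :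
    linearExtension (∑ a ∈ s, f a) P = ∑ a ∈ s, linearExtension (f a) P := by
  simp only [linearExtension_apply, Finset.sum_apply, Finset.mul_sum]
  exact Finset.sum_comm

theorem linearExtension_mul_single [AddMonoid G] (f : G → R) (P : R[G]) (x : G) :
    linearExtension f (P * single x 1) = linearExtension (fun g ↦ f (g + x)) P := by
  induction P using AddMonoidAlgebra.induction_linear with
  | zero => simp
  | add P Q hP hQ => simp [add_mul, hP, hQ]
  | single g r => simp [single_mul_single]

theorem linearExtension_addChar [AddMonoid G] (χ : AddChar G R) (P : R[G]) :
    linearExtension χ P = AddMonoidAlgebra.lift R R G χ.toMonoidHom P :=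
  (AddMonoidAlgebra.lift_apply χ.toMonoidHom P).symm

theorem linearExtension_addChar_eq_zero_of_coset [AddCommGroup G] {H : AddSubgroup G}
    {χ : AddChar G R} (hχ : ∀ h ∈ H, χ h = 1) (v : G) {P : R[G]}
    (hP : ∀ x, linearExtension ((v +ᵥ (H : Set G)).indicator 1) (P * single x 1) = 0) :
    linearExtension χ P = 0 := by
  classical
  have hχ_coset {g g₀ : G} (hg : (g : G ⧸ H) = g₀) : χ g = χ g₀ := by
    rw [← add_sub_cancel g₀ g, χ.map_add_eq_mul, sub_eq_neg_add,
      hχ _ (QuotientAddGroup.eq.1 hg.symm), mul_one]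
  have hcoeff (g₀ : G) :
      ∑ g ∈ P.coeff.support with (QuotientAddGroup.mk g : G ⧸ H) = g₀, P.coeff g = 0 := by
    rw [← hP (v - g₀), linearExtension_mul_single, linearExtension_apply, Finset.sum_filter]
    refine Finset.sum_congr rfl fun g _ ↦ ?_
    have hmem : g + (v - g₀) ∈ v +ᵥ (H : Set G) ↔ (g : G ⧸ H) = g₀ := by
      rw [eq_comm, QuotientAddGroup.eq, mem_leftAddCoset_iff, SetLike.mem_coe,
        show -v + (g + (v - g₀)) = -g₀ + g by abel]
    simp [Set.indicator_apply, hmem]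
  rw [linearExtension_apply,
    ← Finset.sum_fiberwise_of_maps_to fun g hg ↦ Finset.mem_image_of_mem ((↑) : G → G ⧸ H) hg]
  refine Finset.sum_eq_zero fun q _ ↦ ?_
  obtain ⟨g₀, rfl⟩ := QuotientAddGroup.mk_surjective q
  calc ∑ g ∈ P.coeff.support with (QuotientAddGroup.mk g : G ⧸ H) = g₀, P.coeff g * χ g
      = ∑ g ∈ P.coeff.support with (QuotientAddGroup.mk g : G ⧸ H) = g₀, P.coeff g * χ g₀ :=
        Finset.sum_congr rfl fun g hg ↦ by rw [hχ_coset (Finset.mem_filter.1 hg).2]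
    _ = 0 := by rw [← Finset.sum_mul, hcoeff, zero_mul]

end LinearExtension

section Annihilators

variable {R G : Type*} [CommRing R] [AddCommMonoid G]

theorem linearExtension_eq_zero_of_periodic_of_dvd {f : G → R} {h : G} (hf : Periodic f h)
    {P : R[G]} (hP : single h 1 - 1 ∣ P) : linearExtension f P = 0 := by
  obtain ⟨Q, rfl⟩ := hP
  rw [mul_comm, mul_sub, mul_one, map_sub, linearExtension_mul_single, hf.funext, sub_self]

theorem linearExtension_addChar_prod_single_sub_one {κ : Type*} (χ : AddChar G R) (s : Finset κ)
    (h : κ → G) :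
    linearExtension χ (∏ a ∈ s, (single (h a) 1 - 1)) = ∏ a ∈ s, (χ (h a) - 1) := by
  simp [linearExtension_addChar, map_prod]

theorem linearExtension_prod_single_sub_one_mul_of_sum_eq_one {κ : Type*} [Fintype κ]
    [DecidableEq κ] [Nontrivial κ] {f : κ → G → R} (hsum : ∑ a, f a = 1) {j : κ} {h : κ → G}
    (hf : ∀ a ≠ j, Periodic (f a) (h a)) (Q : R[G]) :
    linearExtension (f j) ((∏ a ∈ Finset.univ.erase j, (single (h a) 1 - 1)) * Q) = 0 := by
  set P : R[G] := ∏ a ∈ Finset.univ.erase j, (single (h a) 1 - 1)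
  have hdvd {a : κ} (ha : a ≠ j) : single (h a) 1 - 1 ∣ P * Q :=
    (Finset.dvd_prod_of_mem _ (Finset.mem_erase.2 ⟨ha, Finset.mem_univ a⟩)).mul_right Q
  have hzero {a : κ} (ha : a ≠ j) : linearExtension (f a) (P * Q) = 0 :=
    linearExtension_eq_zero_of_periodic_of_dvd (hf a ha) (hdvd ha)
  have hone : linearExtension 1 (P * Q) = 0 := by
    obtain ⟨a, ha⟩ := exists_ne j
    exact linearExtension_eq_zero_of_periodic_of_dvd (fun _ ↦ rfl) (hdvd ha)
  calc linearExtension (f j) (P * Q)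
      = ∑ a, linearExtension (f a) (P * Q) :=
        (Finset.sum_eq_single j (fun _ _ ha ↦ hzero ha) (by simp)).symm
    _ = 0 := by rw [← linearExtension_sum, hsum, hone]

end Annihilators

theorem periodic_indicator_vadd_addSubgroup {R G : Type*} [Zero R] [One R] [AddGroup G] (v : G)
    {H : AddSubgroup G} {h : G} (hh : h ∈ H) :
    Periodic ((v +ᵥ (H : Set G)).indicator (1 : G → R)) h := by
  classical
  intro x
  have hmem : x + h ∈ v +ᵥ (H : Set G) ↔ x ∈ v +ᵥ (H : Set G) := by
    rw [mem_leftAddCoset_iff, mem_leftAddCoset_iff, ← add_assoc, SetLike.mem_coe,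
      SetLike.mem_coe, H.add_mem_cancel_right hh]
  simp only [Set.indicator_apply, hmem, Pi.one_apply]

theorem sum_indicator_one_eq_one_of_partition {R κ X : Type*} [AddCommMonoid R] [One R]
    [Fintype κ] {T : κ → Set X} (hdisj : Pairwise (Disjoint on T))
    (hcover : ⋃ a, T a = Set.univ) :
    ∑ a, (T a).indicator (1 : X → R) = 1 := by
  ext x
  obtain ⟨a, ha⟩ := Set.iUnion_eq_univ_iff.1 hcover x
  rw [Finset.sum_apply, Finset.sum_eq_single a (fun b _ hba ↦
    Set.indicator_of_notMem (Set.disjoint_right.1 (hdisj hba) ha) 1) (by simp),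
    Set.indicator_of_mem ha]

theorem exists_ne_forall_addChar_eq_one_of_coset_partition {R G κ : Type*} [CommRing R]
    [IsDomain R] [AddCommGroup G] [Finite κ] [Nontrivial κ] (v : κ → G) (H : κ → AddSubgroup G)
    (hdisj : Pairwise (Disjoint on fun a ↦ v a +ᵥ (H a : Set G)))
    (hcover : ⋃ a, v a +ᵥ (H a : Set G) = Set.univ)
    (χ : AddChar G R) {j : κ} (hχ : ∀ h ∈ H j, χ h = 1) :
    ∃ a ≠ j, ∀ h ∈ H a, χ h = 1 := by
  classical
  have := Fintype.ofFinite κ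
  by_contra! hcon
  choose! h hhH hhχ using hcon
  have hχ_prod : ∏ a ∈ Finset.univ.erase j, (χ (h a) - 1) = 0 := by
    rw [← linearExtension_addChar_prod_single_sub_one]
    exact linearExtension_addChar_eq_zero_of_coset hχ (v j) fun x ↦
      linearExtension_prod_single_sub_one_mul_of_sum_eq_one
        (f := fun a ↦ (v a +ᵥ (H a : Set G)).indicator 1)
        (sum_indicator_one_eq_one_of_partition hdisj hcover)
        (fun a ha ↦ periodic_indicator_vadd_addSubgroup (v a) (hhH a ha)) (single x 1)
  obtain ⟨a, ha, hχa⟩ := Finset.prod_eq_zero_iff.1 hχ_prod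
  exact hhχ a (Finset.ne_of_mem_erase ha) (sub_eq_zero.1 hχa)

section Cartesian

variable {ι : Type*}

/-- The Cartesian subgroup `∏ i, n i ℤ` of `ℤ^ι`; a factor with `n i = 0` is trivial. -/
def cartesianSubgroup (n : ι → ℕ) : AddSubgroup (ι → ℤ) :=
  AddSubgroup.pi Set.univ fun i ↦ AddSubgroup.zmultiples (n i : ℤ)

theorem mem_cartesianSubgroup {n : ι → ℕ} {w : ι → ℤ} :
    w ∈ cartesianSubgroup n ↔ ∀ i, (n i : ℤ) ∣ w i := by
  simp [cartesianSubgroup, AddSubgroup.mem_pi, Int.mem_zmultiples_iff]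

theorem vadd_cartesianSubgroup (v : ι → ℤ) (n : ι → ℕ) :
    v +ᵥ (cartesianSubgroup n : Set (ι → ℤ)) = {w | ∀ i, (n i : ℤ) ∣ w i - v i} := by
  ext w
  simp [mem_leftAddCoset_iff, mem_cartesianSubgroup, neg_add_eq_sub]

/-- The character `w ↦ ∏ i ∈ s, z i ^ w i` of `ℤ^ι`. The product is restricted to a finite set so
that `ι` may be infinite. -/
def zpowProdAddChar {R : Type*} [CommMonoid R] (s : Finset ι) (z : ι → Rˣ) :
    AddChar (ι → ℤ) R where
  toFun w := ↑(∏ i ∈ s, z i ^ w i)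
  map_zero_eq_one' := by simp
  map_add_eq_mul' := by simp [zpow_add, Finset.prod_mul_distrib]

theorem zpowProdAddChar_eq_one_iff {R : Type*} [CommMonoid R] {s : Finset ι} {z : ι → Rˣ}
    {w : ι → ℤ} : zpowProdAddChar s z w = 1 ↔ ∏ i ∈ s, z i ^ w i = 1 :=
  Units.val_eq_one

theorem forall_zpowProdAddChar_eq_one_iff {R : Type*} [CommMonoid R] {s : Finset ι} {z : ι → Rˣ}
    {n : ι → ℕ} (hz : ∀ i ∈ s, IsPrimitiveRoot (z i) (n i)) (m : ι → ℕ) :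
    (∀ w ∈ cartesianSubgroup m, zpowProdAddChar s z w = 1) ↔ ∀ i ∈ s, n i ∣ m i := by
  classical
  simp only [zpowProdAddChar_eq_one_iff]
  refine ⟨fun h i hi ↦ ?_, fun h w hw ↦ Finset.prod_eq_one fun i hi ↦ ?_⟩
  · have hmem : Pi.single i (m i : ℤ) ∈ cartesianSubgroup m :=
      mem_cartesianSubgroup.2 fun k ↦ by obtain rfl | hk := eq_or_ne k i <;> simp [*]
    have hprod := h _ hmem
    rw [Finset.prod_eq_single i (fun k _ hk ↦ by simp [hk]) (absurd hi), Pi.single_eq_same,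
      zpow_natCast] at hprod
    exact (hz i hi).dvd_of_pow_eq_one _ hprod
  · rw [(hz i hi).zpow_eq_one_iff_dvd]
    exact (Int.natCast_dvd_natCast.2 (h i hi)).trans (mem_cartesianSubgroup.1 hw i)

theorem exists_complex_units_isPrimitiveRoot (n : ℕ) : ∃ z : ℂˣ, IsPrimitiveRoot z n := by
  obtain rfl | hn := eq_or_ne n 0
  · -- A primitive root of order `0` is an element of infinite order.
    have h2 : ¬IsOfFinOrder (Units.mk0 (2 : ℂ) two_ne_zero) := fun h ↦ by
      simpa using ((Units.coeHom ℂ).isOfFinOrder h).norm_eq_one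
    exact ⟨_, orderOf_eq_zero h2 ▸ IsPrimitiveRoot.orderOf _⟩
  · exact ⟨_, (Complex.isPrimitiveRoot_exp n hn).isUnit_unit hn⟩

theorem maximal_coset_divides_another_general {κ : Type*} [Finite κ] [Nontrivial κ]
    (v : κ → ι → ℤ) (n : κ → ι → ℕ)
    (hdisj : Pairwise (Disjoint on fun a ↦ v a +ᵥ (cartesianSubgroup (n a) : Set (ι → ℤ))))
    (hcover : ⋃ a, v a +ᵥ (cartesianSubgroup (n a) : Set (ι → ℤ)) = Set.univ) (j : κ) :
    ∃ a ≠ j, ∀ i, n j i ∣ n a i := by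
  classical
  by_contra! hcon
  choose i hi using hcon
  have := Fintype.ofFinite κ
  let s : Finset ι := Finset.univ.image fun a : {a // a ≠ j} ↦ i a a.2
  choose z hz using fun k ↦ exists_complex_units_isPrimitiveRoot (n j k)
  obtain ⟨a, ha, hχa⟩ := exists_ne_forall_addChar_eq_one_of_coset_partition v
    (fun a ↦ cartesianSubgroup (n a)) hdisj hcover (zpowProdAddChar s z)
    ((forall_zpowProdAddChar_eq_one_iff (fun k _ ↦ hz k) (n j)).2 fun _ _ ↦ dvd_rfl)
  have has : i a ha ∈ s := Finset.mem_image_of_mem (fun a : {a // a ≠ j} ↦ i a a.2)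
    (Finset.mem_univ ⟨a, ha⟩)
  exact hi a ha ((forall_zpowProdAddChar_eq_one_iff (fun k _ ↦ hz k) (n a)).1 hχa _ has)

end Cartesian

/-- In a tiling of `ℤ^d` by `k ≥ 2` cosets of Cartesian subgroups, if `j`
maximizes the index product `∏ i, n j i`, then there is another coset whose
moduli are divisible by those of `T j` coordinatewise. -/
theorem maximal_coset_divides_another
    (d k : ℕ) (hd : 1 ≤ d) (hk : 2 ≤ k)
    (v : Fin k → (Fin d → ℤ)) (n : Fin k → Fin d → ℕ)
    (hn : ∀ j i, 0 < n j i)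
    (T : Fin k → Set (Fin d → ℤ))
    (hT : ∀ j, T j = {w : Fin d → ℤ | ∀ i, (n j i : ℤ) ∣ (w i - v j i)})
    (hdisj : ∀ j j', j ≠ j' → Disjoint (T j) (T j'))
    (hcover : (⋃ j, T j) = Set.univ)
    (j : Fin k) (hj : ∀ j', ∏ i, n j' i ≤ ∏ i, n j i) :
    ∃ j', j' ≠ j ∧ ∀ i, n j i ∣ n j' i := by
  have : Nontrivial (Fin k) := Fin.nontrivial_iff_two_le.2 hk
  obtain rfl : T = fun a ↦ v a +ᵥ (cartesianSubgroup (n a) : Set (Fin d → ℤ)) :=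
    funext fun a ↦ (hT a).trans (vadd_cartesianSubgroup (v a) (n a)).symm
  exact maximal_coset_divides_another_general v n hdisj hcover j
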